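/- The number of decompositions of the edge polytope of the complete graph K_d equals 2^{d-1} - d - 1. -/

import Mathlib

open scoped BigOperators

/-- `ρ(i,j) = e_i + e_j` -/
noncomputable def rho {d : ℕ} (i j : Fin d) : Fin d → ℝ :=
  fun t => (if t = i then 1 else 0) + (if t = j then 1 else 0)

/-- The edge polytope of a graph `G` on `[d]`. -/
noncomputable def edgePolytope {d : ℕ} (G : SimpleGraph (Fin d)) : Set (Fin d → ℝ) :=
  convexHull ℝ {x | ∃ i j, G.Adj i j ∧ x = rho i j}

/-- dot product -/
def dotp {d : ℕ} (a x : Fin d → ℝ) : ℝ := ∑ t, a t * x t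

/-- a polytope is integral if all its vertices (extreme points) are lattice points -/
def IsIntegralSet {d : ℕ} (P : Set (Fin d → ℝ)) : Prop :=
  ∀ x ∈ Set.extremePoints ℝ P, ∀ t, ∃ z : ℤ, x t = (z : ℝ)

/-- The hyperplane `a·x = b` decomposes `P`: it meets the relative interior of `P`,
both open sides meet `P`, and both closed half-space pieces are integral. -/
def Decomposes {d : ℕ} (P : Set (Fin d → ℝ)) (a : Fin d → ℝ) (b : ℝ) : Prop :=
  (∃ x ∈ intrinsicInterior ℝ P, dotp a x = b) ∧
  (∃ y ∈ P, dotp a y < b) ∧ (∃ y ∈ P, b < dotp a y) ∧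
  IsIntegralSet (P ∩ {x | b ≤ dotp a x}) ∧
  IsIntegralSet (P ∩ {x | dotp a x ≤ b})

lemma dotp_rho {d : ℕ} (a : Fin d → ℝ) (i j : Fin d) : dotp a (rho i j) = a i + a j := by
  simp [dotp, rho, mul_add, Finset.sum_add_distrib]

def QQ (d : ℕ) : Set (Fin d → ℝ) := {x | (∀ t, 0 ≤ x t ∧ x t ≤ 1) ∧ ∑ t, x t = 2}

lemma rho_mem_QQ {d : ℕ} {i j : Fin d} (h : i ≠ j) : rho i j ∈ QQ d := by
  constructor
  · intro t
    unfold rho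
    by_cases h1 : t = i
    · subst h1; simp [h]
    · rw [if_neg h1]; by_cases h2 : t = j <;> simp [h2]
  · simp [rho, Finset.sum_add_distrib]; norm_num

lemma dotp_add {d : ℕ} (a x y : Fin d → ℝ) : dotp a (x + y) = dotp a x + dotp a y := by
  simp [dotp, mul_add, Finset.sum_add_distrib]

lemma dotp_smul {d : ℕ} (a x : Fin d → ℝ) (c : ℝ) : dotp a (c • x) = c * dotp a x := by
  simp only [dotp, Pi.smul_apply, smul_eq_mul, Finset.mul_sum]
  exact Finset.sum_congr rfl fun _ _ => by ring

lemma dotp_neg_left {d : ℕ} (a x : Fin d → ℝ) : dotp (-a) x = - dotp a x := by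
  simp [dotp]

lemma dotp_single {d : ℕ} (a : Fin d → ℝ) (i : Fin d) (c : ℝ) :
    dotp a (Pi.single i c) = a i * c := by
  simp [dotp, Pi.single_apply]

lemma dotp_one {d : ℕ} (x : Fin d → ℝ) : dotp 1 x = ∑ t, x t := by
  simp [dotp]

lemma convex_QQ (d : ℕ) : Convex ℝ (QQ d) := by
  intro x hx y hy a b ha hb hab
  refine ⟨fun t => ?_, ?_⟩
  · have h1 := hx.1 t
    have h2 := hy.1 t
    simp only [Pi.add_apply, Pi.smul_apply, smul_eq_mul]
    constructor
    · nlinarith [mul_nonneg ha h1.1, mul_nonneg hb h2.1]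
    · nlinarith [mul_le_mul_of_nonneg_left h1.2 ha, mul_le_mul_of_nonneg_left h2.2 hb]
  · rw [← dotp_one, dotp_add, dotp_smul, dotp_smul, dotp_one, dotp_one, hx.2, hy.2]
    linarith

/-- the vector `c (e_i - e_j)` -/
def vv {d : ℕ} (i j : Fin d) (c : ℝ) : Fin d → ℝ := Pi.single i c + Pi.single j (-c)

lemma dotp_vv {d : ℕ} (a : Fin d → ℝ) (i j : Fin d) (c : ℝ) :
    dotp a (vv i j c) = (a i - a j) * c := by
  rw [vv, dotp_add, dotp_single, dotp_single]; ring

lemma frac_partner {d : ℕ} (x w : Fin d → ℝ) (z : ℤ) (hx : ∀ t, 0 ≤ x t ∧ x t ≤ 1)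
    (hw : ∀ t, w t = 0 ∨ w t = 1) (hs : dotp w x = z) (i : Fin d) (hi : w i = 1)
    (h0 : 0 < x i) (h1 : x i < 1) : ∃ j, j ≠ i ∧ w j = 1 ∧ 0 < x j ∧ x j < 1 := by
  by_contra hcon
  push Not at hcon
  have hz : ∀ t, ∃ m : ℤ, t ≠ i → w t * x t = m := by
    intro t
    by_cases hti : t = i
    · exact ⟨0, fun h => absurd hti h⟩
    rcases hw t with h | h
    · exact ⟨0, fun _ => by simp [h]⟩
    · rcases (hx t).1.eq_or_lt with h3 | h3
      · exact ⟨0, fun _ => by simp [← h3]⟩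
      · exact ⟨1, fun _ => by
          have := hcon t hti h h3
          have := (hx t).2
          rw [h]; push_cast; linarith⟩
  choose m hm using hz
  unfold dotp at hs
  rw [← Finset.add_sum_erase _ _ (Finset.mem_univ i),
    Finset.sum_congr rfl (fun t ht => hm t (Finset.ne_of_mem_erase ht)), hi, one_mul,
    ← Int.cast_sum] at hs
  have h2 : x i = ((z - ∑ t ∈ Finset.univ.erase i, m t : ℤ) : ℝ) := by
    rw [Int.cast_sub]; linarith
  rw [h2] at h0 h1
  have h3 : (0:ℤ) < z - ∑ t ∈ Finset.univ.erase i, m t := by exact_mod_cast h0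
  have h4 : z - ∑ t ∈ Finset.univ.erase i, m t < (1:ℤ) := by exact_mod_cast h1
  omega

lemma no_perturb {d : ℕ} {C : Set (Fin d → ℝ)} {x : Fin d → ℝ} (hx : x ∈ C.extremePoints ℝ)
    (hQ : x ∈ QQ d) {i j : Fin d} (hij : i ≠ j) (hi0 : 0 < x i) (hi1 : x i < 1)
    (hj0 : 0 < x j) (hj1 : x j < 1) {δ : ℝ} (hδ : 0 < δ)
    (hC : ∀ c, |c| ≤ δ → x + vv i j c ∈ QQ d → x + vv i j c ∈ C) : False := by
  obtain ⟨c, hc0, hcd, hc1, hc2, hc3, hc4⟩ : ∃ c : ℝ, 0 < c ∧ c ≤ δ ∧ c ≤ x i ∧ c ≤ 1 - x i ∧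
      c ≤ x j ∧ c ≤ 1 - x j := by
    refine ⟨min δ (min (min (x i) (1 - x i)) (min (x j) (1 - x j))), ?_, ?_, ?_, ?_, ?_, ?_⟩
    · simp only [lt_min_iff]
      refine ⟨hδ, ⟨hi0, by linarith⟩, hj0, by linarith⟩
    all_goals simp
  have key : ∀ e : ℝ, |e| ≤ c → x + vv i j e ∈ C := by
    intro e he
    apply hC e (he.trans hcd)
    have := abs_le.1 he
    constructor
    · intro t
      have := hQ.1 t
      by_cases h1 : t = i
      · subst h1
        simp [vv, hij]
        constructor <;> linarith
      · by_cases h2 : t = j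
        · subst h2
          simp [vv, h1]
          constructor <;> linarith
        · simpa [vv, h1, h2] using this
    · rw [← dotp_one, dotp_add, dotp_vv, dotp_one, hQ.2]; simp
  have k1 := key c (by rw [abs_of_pos hc0])
  have k2 := key (-c) (by rw [abs_neg, abs_of_pos hc0])
  have := (mem_extremePoints.1 hx).2 _ k1 _ k2 ⟨1/2, 1/2, by norm_num, by norm_num, by norm_num, by
    ext t
    simp only [vv, Pi.add_apply, Pi.smul_apply, smul_eq_mul, Pi.single_apply]
    split_ifs <;> ring⟩
  have h := congrFun this.1 i
  simp [vv, hij] at h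
  linarith

lemma QQ_extreme {d : ℕ} {x : Fin d → ℝ} (hx : x ∈ (QQ d).extremePoints ℝ) :
    ∃ i j, i ≠ j ∧ x = rho i j := by
  have hQ := hx.1
  have h01 : ∀ t, x t = 0 ∨ x t = 1 := by
    intro i
    by_contra hcon
    push Not at hcon
    have h0 := lt_of_le_of_ne (hQ.1 i).1 hcon.1.symm
    have h1 := lt_of_le_of_ne (hQ.1 i).2 hcon.2
    obtain ⟨j, hj, -, hj0, hj1⟩ := frac_partner x 1 2 hQ.1 (fun t => Or.inr rfl)
      (by rw [dotp_one, hQ.2]; norm_num) i rfl h0 h1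
    exact no_perturb hx hQ hj.symm h0 h1 hj0 hj1 one_pos (fun c _ h => h)
  have hx' : x = fun t => if t ∈ Finset.univ.filter (fun t => x t = 1) then 1 else 0 := by
    ext t
    rcases h01 t with h | h <;> simp [h]
  have hc : (Finset.univ.filter (fun t => x t = 1)).card = 2 := by
    have := hQ.2
    rw [hx'] at this
    rw [Finset.sum_ite_mem] at this
    simp only [Finset.univ_inter, Finset.sum_const, nsmul_eq_mul, mul_one] at this
    exact_mod_cast this
  obtain ⟨i, j, hij, hS⟩ := Finset.card_eq_two.1 hc
  refine ⟨i, j, hij, ?_⟩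
  rw [hx', hS]
  ext t
  unfold rho
  by_cases h1 : t = i
  · subst h1; simp [hij]
  · simp [h1]

lemma P_eq (d : ℕ) : edgePolytope (⊤ : SimpleGraph (Fin d)) = QQ d := by
  apply Set.Subset.antisymm
  · apply convexHull_min _ (convex_QQ d)
    rintro x ⟨i, j, h, rfl⟩
    exact rho_mem_QQ h
  · have hcl : IsClosed (QQ d) := by
      have : QQ d = (⋂ t, {x | 0 ≤ x t} ∩ {x | x t ≤ 1}) ∩ {x | ∑ t, x t = 2} := by
        ext x; simp [QQ]
      rw [this]
      refine IsClosed.inter (isClosed_iInter fun t => IsClosed.inter ?_ ?_) ?_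
      · exact isClosed_le continuous_const (continuous_apply t)
      · exact isClosed_le (continuous_apply t) continuous_const
      · exact isClosed_eq (by fun_prop) continuous_const
    have hcp : IsCompact (QQ d) := by
      refine IsCompact.of_isClosed_subset (isCompact_Icc (a := (0 : Fin d → ℝ)) (b := 1)) hcl ?_
      intro x hx
      exact ⟨fun t => (hx.1 t).1, fun t => (hx.1 t).2⟩
    rw [← closure_convexHull_extremePoints hcp (convex_QQ d)]
    have hfin : Set.Finite {x : Fin d → ℝ | ∃ i j, (⊤ : SimpleGraph (Fin d)).Adj i j ∧ x = rho i j} := by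
      refine (Set.finite_range (fun p : Fin d × Fin d => rho p.1 p.2)).subset ?_
      rintro x ⟨i, j, -, rfl⟩
      exact ⟨(i, j), rfl⟩
    apply closure_minimal _ (Set.Finite.isClosed_convexHull ℝ hfin)
    apply convexHull_mono
    intro x hx
    obtain ⟨i, j, h, rfl⟩ := QQ_extreme hx
    exact ⟨i, j, h, rfl⟩

lemma integral_piece {d : ℕ} (a : Fin d → ℝ) (ha : ∀ t, a t = 1 ∨ a t = -1) :
    IsIntegralSet (QQ d ∩ {x | 0 ≤ dotp a x}) := by
  intro x hx i
  have hQ := hx.1.1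
  have hax : 0 ≤ dotp a x := hx.1.2
  by_contra hcon
  push Not at hcon
  have h0 := lt_of_le_of_ne (hQ.1 i).1 (by simpa using (hcon 0).symm)
  have h1 := lt_of_le_of_ne (hQ.1 i).2 (by simpa using hcon 1)
  rcases hax.eq_or_lt with h | h
  · obtain ⟨j, hj, hw, hj0, hj1⟩ := frac_partner x (fun t => (1 + a i * a t) / 2) 1 hQ.1
      (fun t => by rcases ha i with h | h <;> rcases ha t with h' | h' <;> simp [h, h'] <;> norm_num)
      (by
        have : dotp (fun t => (1 + a i * a t) / 2) x = (∑ t, x t) / 2 + a i / 2 * dotp a x := by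
          simp only [dotp, Finset.mul_sum, Finset.sum_div, ← Finset.sum_add_distrib]
          exact Finset.sum_congr rfl fun _ _ => by ring
        rw [this, hQ.2, ← h]; norm_num) i
      (by rcases ha i with h | h <;> simp [h] <;> norm_num) h0 h1
    have hij : a i = a j := by
      rcases ha i with h | h <;> rcases ha j with h' | h' <;> simp [h, h'] at hw ⊢
    refine no_perturb hx hQ hj.symm h0 h1 hj0 hj1 one_pos (fun c _ hq => ⟨hq, ?_⟩)
    simp only [Set.mem_setOf_eq]
    rw [dotp_add, dotp_vv, hij]; linarith
  · obtain ⟨j, hj, -, hj0, hj1⟩ := frac_partner x 1 2 hQ.1 (fun t => Or.inr rfl)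
      (by rw [dotp_one, hQ.2]; norm_num) i rfl h0 h1
    refine no_perturb hx hQ hj.symm h0 h1 hj0 hj1 (half_pos h) (fun c hc hq => ⟨hq, ?_⟩)
    have := abs_le.1 hc
    simp only [Set.mem_setOf_eq]
    rw [dotp_add, dotp_vv]
    rcases ha i with h | h <;> rcases ha j with h' | h' <;> rw [h, h'] <;> linarith

lemma crossing {d : ℕ} (a : Fin d → ℝ) (hI : IsIntegralSet (QQ d ∩ {x | 0 ≤ dotp a x}))
    {i j k : Fin d} (hij : i ≠ j) (hik : i ≠ k) (h1 : 0 < a i + a j) (h2 : a i + a k < 0) :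
    False := by
  have hjk : j ≠ k := by rintro rfl; linarith
  set t : ℝ := (-(a i + a k)) / (a j - a k) with ht
  have hpos : 0 < a j - a k := by linarith
  have ht0 : 0 < t := div_pos (by linarith) hpos
  have ht1 : t < 1 := by rw [ht, div_lt_one hpos]; linarith
  have hte : t * (a j - a k) = -(a i + a k) := by rw [ht]; field_simp
  set y : Fin d → ℝ := Pi.single i 1 + Pi.single j t + Pi.single k (1 - t) with hy
  have yi : y i = 1 := by simp [hy, hij, hik]
  have yj : y j = t := by simp [hy, hij.symm, hjk]
  have yk : y k = 1 - t := by simp [hy, hik.symm, hjk.symm]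
  have yo : ∀ s, s ≠ i → s ≠ j → s ≠ k → y s = 0 := by
    intro s h1 h2 h3; simp [hy, h1, h2, h3]
  have yd : ∀ w : Fin d → ℝ, dotp w y = w i + w j * t + w k * (1 - t) := by
    intro w; rw [hy, dotp_add, dotp_add, dotp_single, dotp_single, dotp_single]; ring
  have hya : dotp a y = 0 := by rw [yd]; linarith
  have hyQ : y ∈ QQ d := by
    refine ⟨fun s => ?_, ?_⟩
    · by_cases s1 : s = i
      · subst s1; rw [yi]; norm_num
      by_cases s2 : s = j
      · subst s2; rw [yj]; constructor <;> linarith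
      by_cases s3 : s = k
      · subst s3; rw [yk]; constructor <;> linarith
      rw [yo s s1 s2 s3]; norm_num
    · rw [← dotp_one, yd]; simp; ring
  have hext : y ∈ (QQ d ∩ {x | 0 ≤ dotp a x}).extremePoints ℝ := by
    refine mem_extremePoints_iff_left.2 ⟨⟨hyQ, hya.ge⟩, ?_⟩
    rintro u ⟨hu, hua⟩ v ⟨hv, hva⟩ ⟨α, β, hα, hβ, hαβ, huv⟩
    simp only [Set.mem_setOf_eq] at hua hva
    have hc : ∀ s, α * u s + β * v s = y s := fun s => by
      have := congrFun huv s; simpa using this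
    have hua0 : dotp a u = 0 := by
      have := hya
      rw [← huv, dotp_add, dotp_smul, dotp_smul] at this
      have h3 := mul_nonneg hβ.le hva
      by_contra hne
      have h4 := mul_pos hα (lt_of_le_of_ne hua (Ne.symm hne))
      linarith
    have uo : ∀ s, s ≠ i → s ≠ j → s ≠ k → u s = 0 := by
      intro s s1 s2 s3
      have := hc s
      rw [yo s s1 s2 s3] at this
      have h3 := mul_nonneg hβ.le (hv.1 s).1
      by_contra hne
      have h4 := mul_pos hα (lt_of_le_of_ne (hu.1 s).1 (Ne.symm hne))
      linarith
    have ui : u i = 1 := by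
      have := hc i
      rw [yi] at this
      have h3 := mul_le_mul_of_nonneg_left (hv.1 i).2 hβ.le
      by_contra hne
      have h4 := mul_lt_mul_of_pos_left (lt_of_le_of_ne (hu.1 i).2 hne) hα
      linarith
    have ue : u = Pi.single i 1 + Pi.single j (u j) + Pi.single k (u k) := by
      ext s
      by_cases s1 : s = i
      · subst s1; simp [hij, hik, ui]
      by_cases s2 : s = j
      · subst s2; simp [s1, hjk]
      by_cases s3 : s = k
      · subst s3; simp [s1, s2]
      simp [s1, s2, s3, uo s s1 s2 s3]
    have ud : ∀ w : Fin d → ℝ, dotp w u = w i + w j * u j + w k * u k := by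
      intro w
      conv_lhs => rw [ue]
      rw [dotp_add, dotp_add, dotp_single, dotp_single, dotp_single]; ring
    have e1 := hu.2
    rw [← dotp_one, ud] at e1
    simp only [Pi.one_apply] at e1
    rw [ud] at hua0
    have ek : u k = 1 - u j := by linarith
    have ej : u j = t := by
      rw [ek] at hua0
      have : (u j - t) * (a j - a k) = 0 := by linarith
      rcases mul_eq_zero.1 this with h | h <;> linarith
    rw [ue, ek, ej]
  obtain ⟨z, hz⟩ := hI y hext j
  rw [yj] at hz
  rw [hz] at ht0 ht1
  have h3 : (0:ℤ) < z := by exact_mod_cast ht0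
  have h4 : z < (1:ℤ) := by exact_mod_cast ht1
  omega

lemma exists_vertex {d : ℕ} (a : Fin d → ℝ) {y : Fin d → ℝ} (hy : y ∈ QQ d) (h : 0 < dotp a y) :
    ∃ i j, i ≠ j ∧ 0 < a i + a j := by
  by_contra hcon
  push Not at hcon
  rw [← P_eq] at hy
  have hsub : edgePolytope (⊤ : SimpleGraph (Fin d)) ⊆ {x | dotp a x ≤ 0} := by
    apply convexHull_min
    · rintro x ⟨i, j, hij, rfl⟩
      simp only [Set.mem_setOf_eq]
      rw [dotp_rho]; exact hcon i j hij
    · intro x hx y hy α β hα hβ _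
      simp only [Set.mem_setOf_eq] at *
      rw [dotp_add, dotp_smul, dotp_smul]
      nlinarith [mul_nonneg hα (neg_nonneg.2 hx), mul_nonneg hβ (neg_nonneg.2 hy)]
  have := hsub hy
  simp only [Set.mem_setOf_eq] at this
  linarith

/-- classification with `b = 0` -/
lemma classify {d : ℕ} (a : Fin d → ℝ) (hI : IsIntegralSet (QQ d ∩ {x | 0 ≤ dotp a x}))
    (hp : ∃ y ∈ QQ d, 0 < dotp a y) (hn : ∃ y ∈ QQ d, dotp a y < 0) :
    ∃ c : ℝ, 0 < c ∧ (∀ t, a t = c ∨ a t = -c) ∧ (∃ i j, i ≠ j ∧ a i = c ∧ a j = c) ∧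
      (∃ i j, i ≠ j ∧ a i = -c ∧ a j = -c) := by
  obtain ⟨y, hy, hy'⟩ := hp
  obtain ⟨z, hz, hz'⟩ := hn
  obtain ⟨i, j, hij, h1⟩ := exists_vertex a hy hy'
  obtain ⟨k, l, hkl, h2⟩ := exists_vertex (-a) hz (by rw [dotp_neg_left]; linarith)
  simp only [Pi.neg_apply] at h2
  have C : ∀ p q r, p ≠ q → p ≠ r → 0 < a p + a q → a p + a r < 0 → False :=
    fun p q r h1 h2 h3 h4 => crossing a hI h1 h2 h3 h4
  have A1 : ∀ m, m ≠ i → 0 ≤ a i + a m := fun m hm => by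
    by_contra h; exact C i j m hij hm.symm h1 (by linarith)
  have A2 : ∀ m, m ≠ j → 0 ≤ a j + a m := fun m hm => by
    by_contra h; exact C j i m hij.symm hm.symm (by linarith) (by linarith)
  have B1 : ∀ m, m ≠ k → a k + a m ≤ 0 := fun m hm => by
    by_contra h; exact C k m l hm.symm hkl (by linarith) (by linarith)
  have B2 : ∀ m, m ≠ l → a l + a m ≤ 0 := fun m hm => by
    by_contra h; exact C l m k hm.symm hkl.symm (by linarith) (by linarith)
  have ik : i ≠ k := by
    rintro rfl; have := A1 l hkl.symm; linarith
  have il : i ≠ l := by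
    rintro rfl; have := A1 k hkl; linarith
  have jk : j ≠ k := by
    rintro rfl; have := A2 l hkl.symm; linarith
  have jl : j ≠ l := by
    rintro rfl; have := A2 k hkl; linarith
  have e1 := A1 k ik.symm
  have e2 := A1 l il.symm
  have e3 := A2 k jk.symm
  have e4 := A2 l jl.symm
  have f1 := B1 i ik
  have f2 := B1 j jk
  have f3 := B2 i il
  have f4 := B2 j jl
  refine ⟨a i, by linarith, fun m => ?_, ⟨i, j, hij, rfl, by linarith⟩,
    ⟨k, l, hkl, by linarith, by linarith⟩⟩
  by_cases hmi : m = i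
  · left; rw [hmi]
  by_cases hmk : m = k
  · right; rw [hmk]; linarith
  by_contra hcon
  push Not at hcon
  have g1 := A1 m hmi
  have g2 := B1 m hmk
  have g3 : 0 < a m + a i := lt_of_le_of_ne (by linarith) (fun h => hcon.2 (by linarith))
  have g4 : a m + a k < 0 := lt_of_le_of_ne (by linarith) (fun h => hcon.1 (by linarith))
  exact C m i k hmi hmk g3 g4

lemma interior_pt {d : ℕ} (x : Fin d → ℝ) (h : ∀ t, 0 < x t ∧ x t < 1) (hs : ∑ t, x t = 2) :
    x ∈ intrinsicInterior ℝ (QQ d) := by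
  have hxQ : x ∈ QQ d := ⟨fun t => ⟨(h t).1.le, (h t).2.le⟩, hs⟩
  have hspan : ∀ y ∈ affineSpan ℝ (QQ d), ∑ t, y t = 2 := by
    intro y hy
    have hle : affineSpan ℝ (QQ d) ≤
        AffineSubspace.mk' x (LinearMap.ker (∑ t, LinearMap.proj (R := ℝ) (φ := fun _ : Fin d => ℝ) t)) := by
      rw [affineSpan_le]
      intro z hz
      simp [AffineSubspace.mem_mk', LinearMap.mem_ker, hz.2, hs]
    have := hle hy
    simp [AffineSubspace.mem_mk', LinearMap.mem_ker, hs] at this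
    linarith
  rw [mem_intrinsicInterior]
  refine ⟨⟨x, subset_affineSpan ℝ _ hxQ⟩, ?_, rfl⟩
  rw [mem_interior]
  refine ⟨{y | ∀ t, 0 < y.1 t ∧ y.1 t < 1}, ?_, ?_, h⟩
  · intro y hy
    exact ⟨fun t => ⟨(hy t).1.le, (hy t).2.le⟩, hspan _ y.2⟩
  · simp only [Set.setOf_forall]
    refine isOpen_iInter_of_finite fun t => ?_
    refine IsOpen.and (isOpen_lt continuous_const ?_) (isOpen_lt ?_ continuous_const)
    · exact (continuous_apply t).comp continuous_subtype_val
    · exact (continuous_apply t).comp continuous_subtype_val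

lemma neg_piece {d : ℕ} (a : Fin d → ℝ) :
    {x | dotp a x ≤ 0} = {x | 0 ≤ dotp (-a) x} := by
  ext x; simp [dotp_neg_left]

lemma decomposes_of {d : ℕ} (a : Fin d → ℝ) (ha : ∀ t, a t = 1 ∨ a t = -1)
    (hp : ∃ i j, i ≠ j ∧ a i = 1 ∧ a j = 1) (hn : ∃ i j, i ≠ j ∧ a i = -1 ∧ a j = -1) :
    Decomposes (QQ d) a 0 := by
  obtain ⟨i, j, hij, hi, hj⟩ := hp
  obtain ⟨k, l, hkl, hk, hl⟩ := hn
  refine ⟨?_, ⟨rho k l, rho_mem_QQ hkl, ?_⟩, ⟨rho i j, rho_mem_QQ hij, ?_⟩, ?_, ?_⟩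
  · set p := (Finset.univ.filter (fun t => a t = 1)).card with hpdef
    set q := (Finset.univ.filter (fun t => ¬ a t = 1)).card with hqdef
    have hp2 : 1 < p := Finset.one_lt_card.2 ⟨i, by simp [hi], j, by simp [hj], hij⟩
    have hq2 : 1 < q := Finset.one_lt_card.2 ⟨k, by simp [hk]; norm_num, l, by simp [hl]; norm_num, hkl⟩
    have hp' : (1:ℝ) < p := by exact_mod_cast hp2
    have hq' : (1:ℝ) < q := by exact_mod_cast hq2
    refine ⟨fun t => if a t = 1 then (p:ℝ)⁻¹ else (q:ℝ)⁻¹, interior_pt _ (fun t => ?_) ?_, ?_⟩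
    · split_ifs
      · exact ⟨by positivity, inv_lt_one_of_one_lt₀ hp'⟩
      · exact ⟨by positivity, inv_lt_one_of_one_lt₀ hq'⟩
    · rw [Finset.sum_ite, Finset.sum_const, Finset.sum_const, nsmul_eq_mul, nsmul_eq_mul,
        ← hpdef, ← hqdef, mul_inv_cancel₀ (by positivity), mul_inv_cancel₀ (by positivity)]
      norm_num
    · have : ∀ t, a t * (if a t = 1 then (p:ℝ)⁻¹ else (q:ℝ)⁻¹) =
          if a t = 1 then (p:ℝ)⁻¹ else -(q:ℝ)⁻¹ := by
        intro t
        rcases ha t with h | h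
        · simp [h]
        · have : ¬ a t = 1 := by rw [h]; norm_num
          rw [if_neg this, if_neg this, h]; ring
      unfold dotp
      rw [Finset.sum_congr rfl (fun t _ => this t),
        Finset.sum_ite, Finset.sum_const, Finset.sum_const, nsmul_eq_mul, nsmul_eq_mul,
        ← hpdef, ← hqdef, mul_neg, mul_inv_cancel₀ (by positivity), mul_inv_cancel₀ (by positivity)]
      norm_num
  · rw [dotp_rho, hk, hl]; norm_num
  · rw [dotp_rho, hi, hj]; norm_num
  · exact integral_piece a ha
  · rw [neg_piece]
    exact integral_piece (-a) (fun t => by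
      rcases ha t with h | h <;> simp [h])

/-- the pair of pieces -/
def pieces {d : ℕ} (a : Fin d → ℝ) : Set (Set (Fin d → ℝ)) :=
  {QQ d ∩ {x | 0 ≤ dotp a x}, QQ d ∩ {x | dotp a x ≤ 0}}

lemma pieces_neg {d : ℕ} (a : Fin d → ℝ) : pieces (-a) = pieces a := by
  unfold pieces
  rw [neg_piece, neg_piece, neg_neg, Set.pair_comm]

lemma pieces_smul {d : ℕ} (a : Fin d → ℝ) {c : ℝ} (hc : 0 < c) : pieces (c • a) = pieces a := by
  have : ∀ x, dotp (c • a) x = c * dotp a x := by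
    intro x
    simp only [dotp, Pi.smul_apply, smul_eq_mul, Finset.mul_sum]
    exact Finset.sum_congr rfl fun _ _ => by ring
  unfold pieces
  simp only [this, mul_nonneg_iff_of_pos_left hc, mul_nonpos_iff_pos_imp_nonpos]
  have h2 : ∀ x, c * dotp a x ≤ 0 ↔ dotp a x ≤ 0 := fun x => by
    constructor
    · intro h; by_contra hh; push Not at hh; linarith [mul_pos hc hh]
    · intro h; exact mul_nonpos_of_nonneg_of_nonpos hc.le h
  simp only [← mul_nonpos_iff_pos_imp_nonpos, h2]

lemma pieces_inv {d : ℕ} (a : Fin d → ℝ) {i j : Fin d} (h : i ≠ j) :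
    (∀ p ∈ pieces a, rho i j ∈ p) ↔ a i + a j = 0 := by
  simp only [pieces, Set.mem_insert_iff, Set.mem_singleton_iff, forall_eq_or_imp, forall_eq,
    Set.mem_inter_iff, rho_mem_QQ h, true_and, Set.mem_setOf_eq, dotp_rho]
  constructor
  · rintro ⟨h1, h2⟩; linarith
  · intro h; rw [h]; simp

lemma char_decomp {d : ℕ} (s : Set (Set (Fin d → ℝ))) :
    (∃ (a : Fin d → ℝ) (b : ℝ), Decomposes (QQ d) a b ∧
        s = {QQ d ∩ {x | b ≤ dotp a x}, QQ d ∩ {x | dotp a x ≤ b}}) ↔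
    ∃ a : Fin d → ℝ, (∀ t, a t = 1 ∨ a t = -1) ∧ (∃ i j, i ≠ j ∧ a i = 1 ∧ a j = 1) ∧
      (∃ i j, i ≠ j ∧ a i = -1 ∧ a j = -1) ∧ s = pieces a := by
  constructor
  · rintro ⟨a, b, ⟨-, ⟨y, hy, hyn⟩, ⟨z, hz, hzp⟩, hI, -⟩, rfl⟩
    set a' : Fin d → ℝ := a - (b / 2) • 1 with ha'
    have hd : ∀ x ∈ QQ d, dotp a' x = dotp a x - b := by
      intro x hx
      have : dotp a' x = dotp a x - b / 2 * ∑ t, x t := by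
        simp only [dotp, ha', Finset.mul_sum, ← Finset.sum_sub_distrib]
        exact Finset.sum_congr rfl fun _ _ => by simp; ring
      rw [this, hx.2]; ring
    have e1 : QQ d ∩ {x | b ≤ dotp a x} = QQ d ∩ {x | 0 ≤ dotp a' x} := by
      ext x
      simp only [Set.mem_inter_iff, Set.mem_setOf_eq]
      refine and_congr_right fun hx => ?_
      rw [hd x hx, sub_nonneg]
    have e2 : QQ d ∩ {x | dotp a x ≤ b} = QQ d ∩ {x | dotp a' x ≤ 0} := by
      ext x
      simp only [Set.mem_inter_iff, Set.mem_setOf_eq]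
      refine and_congr_right fun hx => ?_
      rw [hd x hx, sub_nonpos]
    rw [e1] at hI
    obtain ⟨c, hc, h1, ⟨i, j, hij, hi, hj⟩, ⟨k, l, hkl, hk, hl⟩⟩ := classify a' hI
      ⟨z, hz, by rw [hd z hz]; linarith⟩ ⟨y, hy, by rw [hd y hy]; linarith⟩
    refine ⟨c⁻¹ • a', fun t => ?_, ⟨i, j, hij, ?_, ?_⟩, ⟨k, l, hkl, ?_, ?_⟩, ?_⟩
    · rcases h1 t with h | h <;> simp [h, hc.ne']
    · simp [hi, hc.ne']
    · simp [hj, hc.ne']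
    · simp [hk, hc.ne']
    · simp [hl, hc.ne']
    · rw [e1, e2, pieces_smul _ (inv_pos.2 hc)]; rfl
  · rintro ⟨a, h1, h2, h3, rfl⟩
    exact ⟨a, 0, decomposes_of a h1 h2 h3, rfl⟩

/-- sign vector -/
noncomputable def sg {n : ℕ} (T : Finset (Fin n)) : Fin (n + 1) → ℝ :=
  Fin.cons 1 (fun i => if i ∈ T then 1 else -1)

lemma count (n : ℕ) :
    ((Finset.univ : Finset (Finset (Fin n))).filter (fun T => 1 ≤ T.card ∧ 1 < Tᶜ.card)).card
      = 2 ^ n - (n + 1) - 1 := by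
  rcases Nat.lt_or_ge n 2 with h | h
  · interval_cases n <;> decide
  have h1 := Finset.card_filter_add_card_filter_not (s := (Finset.univ : Finset (Finset (Fin n))))
    (fun T => 1 ≤ T.card ∧ 1 < Tᶜ.card)
  have h2 : (Finset.univ : Finset (Finset (Fin n))).filter
      (fun T => ¬ (1 ≤ T.card ∧ 1 < Tᶜ.card)) =
      (Finset.powersetCard 0 Finset.univ ∪ Finset.powersetCard (n - 1) Finset.univ) ∪
        Finset.powersetCard n Finset.univ := by
    ext T
    have : T.card ≤ n := by simpa using Finset.card_le_univ T
    simp only [Finset.mem_filter, Finset.mem_univ, true_and, Finset.mem_union,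
      Finset.mem_powersetCard, Finset.subset_univ, Finset.card_compl, Fintype.card_fin]
    omega
  rw [h2, Finset.card_union_of_disjoint, Finset.card_union_of_disjoint] at h1
  · simp only [Finset.card_powersetCard, Finset.card_univ, Fintype.card_fin, Nat.choose_zero_right,
      Nat.choose_self, Fintype.card_finset] at h1
    rw [Nat.choose_symm (by omega : 1 ≤ n), Nat.choose_one_right] at h1
    omega
  · rw [Finset.disjoint_left]
    intro T
    simp only [Finset.mem_powersetCard]
    omega
  · rw [Finset.disjoint_left]
    intro T
    simp only [Finset.mem_union, Finset.mem_powersetCard]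
    omega

/-- the number of decompositions of the edge polytope of the complete
graph K_d equals 2^(d-1) - d - 1. -/
theorem stmt13 (d : ℕ) :
    Nat.card {s : Set (Set (Fin d → ℝ)) //
      ∃ (a : Fin d → ℝ) (b : ℝ),
        Decomposes (edgePolytope (⊤ : SimpleGraph (Fin d))) a b ∧
        s = {edgePolytope (⊤ : SimpleGraph (Fin d)) ∩ {x | b ≤ dotp a x},
             edgePolytope (⊤ : SimpleGraph (Fin d)) ∩ {x | dotp a x ≤ b}}} =
    2 ^ (d - 1) - d - 1 := by
  rw [P_eq]
  simp only [char_decomp]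
  rcases d with _ | n
  · have : IsEmpty {s : Set (Set (Fin 0 → ℝ)) // ∃ a : Fin 0 → ℝ,
        (∀ t, a t = 1 ∨ a t = -1) ∧ (∃ i j, i ≠ j ∧ a i = 1 ∧ a j = 1) ∧
        (∃ i j, i ≠ j ∧ a i = -1 ∧ a j = -1) ∧ s = pieces a} :=
      ⟨fun ⟨_, _, _, ⟨i, _⟩, _⟩ => i.elim0⟩
    simp
  have hS : {s : Set (Set (Fin (n + 1) → ℝ)) | ∃ a : Fin (n + 1) → ℝ,
        (∀ t, a t = 1 ∨ a t = -1) ∧ (∃ i j, i ≠ j ∧ a i = 1 ∧ a j = 1) ∧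
        (∃ i j, i ≠ j ∧ a i = -1 ∧ a j = -1) ∧ s = pieces a} =
      (fun T : Finset (Fin n) => pieces (sg T)) ''
        ((Finset.univ : Finset (Finset (Fin n))).filter
          (fun T => 1 ≤ T.card ∧ 1 < Tᶜ.card) : Finset (Finset (Fin n))) := by
    ext s
    simp only [Set.mem_setOf_eq, Set.mem_image, Finset.coe_filter, Finset.mem_univ, true_and]
    constructor
    · intro h
      have h' : ∃ a : Fin (n + 1) → ℝ, a 0 = 1 ∧
        (∀ t, a t = 1 ∨ a t = -1) ∧ (∃ i j, i ≠ j ∧ a i = 1 ∧ a j = 1) ∧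
        (∃ i j, i ≠ j ∧ a i = -1 ∧ a j = -1) ∧ s = pieces a := by
        obtain ⟨a, h1, ⟨i, j, hij, hi, hj⟩, ⟨k, l, hkl, hk, hl⟩, hs⟩ := h
        rcases h1 0 with h0 | h0
        · exact ⟨a, h0, h1, ⟨i, j, hij, hi, hj⟩, ⟨k, l, hkl, hk, hl⟩, hs⟩
        · refine ⟨-a, by simp [h0], fun t => ?_, ⟨k, l, hkl, by simp [hk], by simp [hl]⟩,
            ⟨i, j, hij, by simp [hi], by simp [hj]⟩, by rw [pieces_neg, hs]⟩
          rcases h1 t with h | h <;> simp [h]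
      obtain ⟨a, h0, h1, ⟨i, j, hij, hi, hj⟩, ⟨k, l, hkl, hk, hl⟩, hs⟩ := h'
      have hsg : sg (Finset.univ.filter (fun t : Fin n => a t.succ = 1)) = a := by
        ext t
        refine Fin.cases ?_ (fun t => ?_) t
        · simp [sg, h0]
        · rcases h1 t.succ with h | h
          · simp [sg, h]
          · simp only [sg, Fin.cons_succ, Finset.mem_filter, Finset.mem_univ, true_and, h]
            norm_num
      refine ⟨Finset.univ.filter (fun t : Fin n => a t.succ = 1), ⟨?_, ?_⟩, by rw [hsg, hs]⟩
      · rw [Nat.one_le_iff_ne_zero, Finset.card_ne_zero]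
        by_cases hi0 : i = 0
        · obtain ⟨j', rfl⟩ := Fin.exists_succ_eq.2 (fun h : j = 0 => hij (hi0.trans h.symm))
          exact ⟨j', by simp [hj]⟩
        · obtain ⟨i', rfl⟩ := Fin.exists_succ_eq.2 hi0
          exact ⟨i', by simp [hi]⟩
      · obtain ⟨k', rfl⟩ := Fin.exists_succ_eq.2 (fun h : k = 0 => by rw [h, h0] at hk; norm_num at hk)
        obtain ⟨l', rfl⟩ := Fin.exists_succ_eq.2 (fun h : l = 0 => by rw [h, h0] at hl; norm_num at hl)
        refine Finset.one_lt_card.2 ⟨k', ?_, l', ?_, fun h => hkl (by rw [h])⟩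
        · simp only [Finset.mem_compl, Finset.mem_filter, Finset.mem_univ, true_and, hk]; norm_num
        · simp only [Finset.mem_compl, Finset.mem_filter, Finset.mem_univ, true_and, hl]; norm_num
    · rintro ⟨T, ⟨hT1, hT2⟩, rfl⟩
      rw [Nat.one_le_iff_ne_zero, Finset.card_ne_zero] at hT1
      obtain ⟨i, hi⟩ := hT1
      obtain ⟨k, hk, l, hl, hkl⟩ := Finset.one_lt_card.1 hT2
      rw [Finset.mem_compl] at hk hl
      refine ⟨sg T, fun t => ?_, ⟨0, i.succ, (Fin.succ_ne_zero i).symm, by simp [sg], by simp [sg, hi]⟩,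
        ⟨k.succ, l.succ, fun h => hkl (Fin.succ_injective _ h), by simp [sg, hk], by simp [sg, hl]⟩, rfl⟩
      refine Fin.cases ?_ (fun t => ?_) t
      · simp [sg]
      · by_cases h : t ∈ T <;> simp [sg, h]
  have hinj : Function.Injective (fun T : Finset (Fin n) => pieces (sg T)) := by
    intro T T' h
    dsimp only at h
    ext t
    have key : ∀ T : Finset (Fin n), (∀ p ∈ pieces (sg T), rho 0 t.succ ∈ p) ↔ t ∉ T := by
      intro T
      rw [pieces_inv _ (Fin.succ_ne_zero t).symm]
      by_cases h : t ∈ T <;> simp [sg, h]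
    have h1 := key T
    rw [h, key T'] at h1
    tauto
  have h3 := Set.ncard_image_of_injective
    (((Finset.univ : Finset (Finset (Fin n))).filter
          (fun T => 1 ≤ T.card ∧ 1 < Tᶜ.card) : Finset (Finset (Fin n))) : Set (Finset (Fin n))) hinj
  rw [← hS, Set.ncard_coe_finset, count] at h3
  exact h3
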